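/- Let n ≥ 1 and m ≥ 2 be integers, and let φ : ℂ[y₁,…,yₙ] → ℂ[x₁,…,xₙ] be the ℂ-algebra homomorphism determined by φ(y₁) = x₁^m and φ(yᵢ) = xᵢ for i ≥ 2. Then for every polynomial g ∈ ℂ[y₁,…,yₙ], the power x₁^{m−1} divides φ(g) in ℂ[x₁,…,xₙ] if and only if y₁ divides g in ℂ[y₁,…,yₙ]. -/

import Mathlib

open MvPolynomial

/-- local content of Lemma 2.3.2.
Let `n ≥ 1`, `m ≥ 2`, and let `φ : ℂ[y₁,…,yₙ] → ℂ[x₁,…,xₙ]` be the ℂ-algebra map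
with `φ(y₁) = x₁^m` and `φ(yᵢ) = xᵢ` for `i ≥ 2`.  Then `x₁^(m-1) ∣ φ(g)` iff `y₁ ∣ g`. -/
theorem stmt_0 (n m : ℕ) (hn : 1 ≤ n) (hm : 2 ≤ m)
    (φ : MvPolynomial (Fin n) ℂ →ₐ[ℂ] MvPolynomial (Fin n) ℂ)
    (hφ : φ = aeval (fun i : Fin n =>
      if i = (⟨0, hn⟩ : Fin n) then (X (⟨0, hn⟩ : Fin n)) ^ m else X i))
    (g : MvPolynomial (Fin n) ℂ) :
    (X (⟨0, hn⟩ : Fin n)) ^ (m - 1) ∣ φ g ↔ (X (⟨0, hn⟩ : Fin n)) ∣ g := by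
  subst hφ
  set z : Fin n := ⟨0, hn⟩ with hz
  constructor
  · intro h
    let e : MvPolynomial (Fin n) ℂ →ₐ[ℂ] MvPolynomial (Fin n) ℂ :=
      aeval (fun i : Fin n => if i = z then 0 else X i)
    have hez : e (X z) = 0 := by simp [e]
    have h1 : e.comp (aeval (fun i : Fin n => if i = z then (X z) ^ m else X i)) = e := by
      apply MvPolynomial.algHom_ext
      intro i
      by_cases hi : i = z
      · subst hi
        have hm0 : m ≠ 0 := by omega
        simp [hez, hm0]
      · simp [hi]
    have h2 : X z ∣ aeval (fun i : Fin n => if i = z then (X z : MvPolynomial (Fin n) ℂ) ^ m else X i) g :=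
      (dvd_pow_self _ (by omega)).trans h
    have h3 : e g = 0 := by
      obtain ⟨q, hq⟩ := h2
      rw [← h1, AlgHom.comp_apply, hq, map_mul, hez, zero_mul]
    let I : Ideal (MvPolynomial (Fin n) ℂ) := Ideal.span {X z}
    have h4 : (Ideal.Quotient.mkₐ ℂ I).comp e = Ideal.Quotient.mkₐ ℂ I := by
      apply MvPolynomial.algHom_ext
      intro i
      by_cases hi : i = z
      · subst hi
        rw [AlgHom.comp_apply, hez, map_zero, Ideal.Quotient.mkₐ_eq_mk]
        exact (Ideal.Quotient.eq_zero_iff_mem.2 (Ideal.mem_span_singleton_self _)).symm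
      · simp [e, hi]
    have h5 : Ideal.Quotient.mkₐ ℂ I g = 0 := by
      rw [← h4, AlgHom.comp_apply, h3, map_zero]
    rw [Ideal.Quotient.mkₐ_eq_mk] at h5
    exact Ideal.mem_span_singleton.1 (Ideal.Quotient.eq_zero_iff_mem.1 h5)
  · rintro ⟨q, rfl⟩
    rw [map_mul, aeval_X, if_pos rfl]
    exact (pow_dvd_pow _ (by omega)).mul_right _
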